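/- Let V be the additive group ℝ × ℝ equipped with the topology induced by the projection onto the first coordinate (equivalently, the topology induced by the seminorm N(x,y) = |x|; its open sets are exactly the sets U × ℝ with U ⊆ ℝ open in the euclidean topology). Let 𝓜 be the σ-algebra on ℝ × ℝ generated by the open sets and the compact sets of V. Then there is no measure μ on 𝓜 which is simultaneously nonzero, translation-invariant (μ(g + A) = μ(A) for every g ∈ V and every A ∈ 𝓜), and finite on every compact subset of V. -/

import Mathlib

open MeasureTheory Set

/-- The topology on `ℝ × ℝ` induced by the projection onto the first coordinate
(equivalently, by the seminorm `N (x, y) = |x|`). -/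
noncomputable def tauV : TopologicalSpace (ℝ × ℝ) :=
  TopologicalSpace.induced Prod.fst inferInstance

/-- The σ-algebra on `ℝ × ℝ` generated by the open sets and the compact sets of `V`. -/
noncomputable def MbkV : MeasurableSpace (ℝ × ℝ) :=
  MeasurableSpace.generateFrom
    {s : Set (ℝ × ℝ) | @IsOpen _ tauV s ∨ @IsCompact _ tauV s}

/-!
A set is compact in `V` exactly when its first projection is compact in `ℝ`. Hence the half-open
unit squares `[a, a + 1] × [b, b + 1)` are compact, so measurable. They are translates of one
another, so an invariant measure gives all of them the same mass `c`. The squares with `a = 0` and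
`b ∈ ℕ` are disjoint subsets of the compact strip `[0, 1] × ℝ`, whose measure is finite; hence
`c = 0`. As countably many squares cover the plane, the measure vanishes.
-/

/-- A set is compact in `V` as soon as its projection to the first coordinate is compact. -/
theorem isCompact_tauV_of_image_fst {K : Set (ℝ × ℝ)} (h : IsCompact (Prod.fst '' K)) :
    @IsCompact _ tauV K := by
  letI : TopologicalSpace (ℝ × ℝ) := tauV
  have hi : Topology.IsInducing (Prod.fst : ℝ × ℝ → ℝ) := ⟨rfl⟩
  exact hi.isCompact_iff.mpr h

/-- The half-open unit square with lower left corner `(a, b)`. -/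
def unitSquare (a b : ℝ) : Set (ℝ × ℝ) := Icc a (a + 1) ×ˢ Ico b (b + 1)

theorem isCompact_unitSquare (a b : ℝ) : @IsCompact _ tauV (unitSquare a b) := by
  apply isCompact_tauV_of_image_fst
  rw [unitSquare, fst_image_prod _ (nonempty_Ico.mpr (lt_add_one b))]
  exact isCompact_Icc

theorem isCompact_strip : @IsCompact _ tauV (Icc (0 : ℝ) 1 ×ˢ (univ : Set ℝ)) := by
  apply isCompact_tauV_of_image_fst
  rw [fst_image_prod _ univ_nonempty]
  exact isCompact_Icc

theorem measurableSet_unitSquare (a b : ℝ) : MeasurableSet[MbkV] (unitSquare a b) :=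
  MeasurableSpace.measurableSet_generateFrom (Or.inr (isCompact_unitSquare a b))

theorem image_add_unitSquare (a b : ℝ) :
    (fun x => (a, b) + x) '' unitSquare 0 0 = unitSquare a b := by
  ext ⟨x, y⟩
  simp only [unitSquare, mem_image, mem_prod, mem_Icc, mem_Ico]
  constructor
  · rintro ⟨⟨u, v⟩, ⟨⟨h1, h2⟩, h3, h4⟩, h⟩
    simp only [Prod.mk_add_mk, Prod.mk.injEq] at h
    obtain ⟨rfl, rfl⟩ := h
    refine ⟨⟨?_, ?_⟩, ?_, ?_⟩ <;> simp only at * <;> linarith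
  · rintro ⟨⟨h1, h2⟩, h3, h4⟩
    refine ⟨(x - a, y - b), ⟨⟨?_, ?_⟩, ?_, ?_⟩, ?_⟩
    · simpa using h1
    · simp only; linarith
    · simpa using h3
    · simp only; linarith
    · simp

theorem disjoint_unitSquare :
    Pairwise (Function.onFun Disjoint fun n : ℕ => unitSquare 0 (n : ℝ)) := by
  intro m n hmn
  refine Set.disjoint_left.mpr ?_
  rintro ⟨x, y⟩ ⟨-, h1, h2⟩ ⟨-, h3, h4⟩
  apply hmn
  simp only at h1 h2 h3 h4
  have hm : m < n + 1 := by exact_mod_cast h1.trans_lt h4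
  have hn : n < m + 1 := by exact_mod_cast h3.trans_lt h2
  omega

theorem iUnion_unitSquare : ⋃ p : ℤ × ℤ, unitSquare (p.1 : ℝ) (p.2 : ℝ) = univ := by
  refine eq_univ_of_forall ?_
  rintro ⟨x, y⟩
  exact mem_iUnion.mpr ⟨(⌊x⌋, ⌊y⌋), ⟨Int.floor_le x, (Int.lt_floor_add_one x).le⟩,
    Int.floor_le y, Int.lt_floor_add_one y⟩

/-- There is no measure on the σ-algebra generated by the open sets and the compact sets
of `V = ℝ × ℝ` (with the topology induced by the first projection) which is nonzero,
translation-invariant, and finite on every compact subset of `V`. -/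
theorem no_haar_on_sigma_algebra_with_compacts :
    ¬ ∃ μ : @Measure (ℝ × ℝ) MbkV,
      μ ≠ 0 ∧
      (∀ (g : ℝ × ℝ) (A : Set (ℝ × ℝ)), MeasurableSet[MbkV] A →
        μ ((fun x => g + x) '' A) = μ A) ∧
      (∀ K : Set (ℝ × ℝ), @IsCompact _ tauV K → μ K < ⊤) := by
  letI : MeasurableSpace (ℝ × ℝ) := MbkV
  rintro ⟨μ, hμ, hinv, hfin⟩
  have hsq : ∀ a b : ℝ, μ (unitSquare a b) = μ (unitSquare 0 0) := fun a b => by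
    rw [← image_add_unitSquare a b]
    exact hinv (a, b) _ (measurableSet_unitSquare 0 0)
  have hzero : μ (unitSquare 0 0) = 0 := by
    by_contra hne
    have hsub : ⋃ n : ℕ, unitSquare 0 (n : ℝ) ⊆ Icc (0 : ℝ) 1 ×ˢ (univ : Set ℝ) :=
      iUnion_subset fun n => prod_mono (by rw [zero_add]) (subset_univ _)
    have hlt := (measure_mono hsub).trans_lt (hfin _ isCompact_strip)
    rw [measure_iUnion disjoint_unitSquare fun n => measurableSet_unitSquare 0 n] at hlt
    simp only [hsq] at hlt
    rw [ENNReal.tsum_const_eq_top_of_ne_zero hne] at hlt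
    exact lt_irrefl _ hlt
  apply hμ
  rw [← Measure.measure_univ_eq_zero, ← iUnion_unitSquare, measure_iUnion_null_iff]
  exact fun p => (hsq _ _).trans hzero
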